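/- arXiv:2503.01247 — 3 statements merged into one kernel-verified Lean document; each statement's English description precedes it below -/
import Mathlib

section
/- For all pointed Kripke models (A,a) and (B,b) over a modal vocabulary σ and every k ∈ ℕ, there exists a positive bisimulation from F_k(A,a) to F_k(B,b) in EM(M_k) if, and only if, Duplicator has a winning strategy in the positive k-round bisimulation game from (A,a) to (B,b). -/
/-- A modal vocabulary: a type `P` of unary relation symbols (propositional variables)
and a type `R` of binary relation symbols (accessibility relations / modalities). -/
structure MVocab : Type 1 where
  P : Type
  R : Type

/-- A Kripke model over the modal vocabulary `V` with carrier `α`. -/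
structure Kripke (V : MVocab) (α : Type) : Type where
  val : V.P → α → Prop
  rel : V.R → α → α → Prop
/-- `PMWin A B n x y` : Duplicator has a winning strategy in the `n`-round positive
bisimulation game from `(A, x)` to `(B, y)`: in each round Spoiler chooses a binary
relation symbol `r` and an `r`-successor of the current element in either structure,
and Duplicator responds with an `r`-successor of the current element in the other
structure; Duplicator wins if every unary relation symbol holding at a chosen element
of `A` holds at the corresponding element of `B`. -/
def PMWin {V : MVocab} {α β : Type} (A : Kripke V α) (B : Kripke V β) :
    ℕ → α → β → Prop
  | 0, x, y => ∀ p, A.val p x → B.val p y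
  | n + 1, x, y => (∀ p, A.val p x → B.val p y) ∧
      (∀ r x', A.rel r x x' → ∃ y', B.rel r y y' ∧ PMWin A B n x' y') ∧
      (∀ r y', B.rel r y y' → ∃ x', A.rel r x x' ∧ PMWin A B n x' y')
/-- An object datum for the Eilenberg–Moore category `EM(M_k)` of the modal comonad:
a pointed Kripke model together with a (tree) order. -/
structure KObj (V : MVocab) : Type 1 where
  carrier : Type
  pt : carrier
  val : V.P → carrier → Prop
  rel : V.R → carrier → carrier → Prop
  le : carrier → carrier → Prop

namespace KObj

variable {V : MVocab}

/-- The covering relation of the order of `X`. -/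
def Cover (X : KObj V) (x y : X.carrier) : Prop :=
  X.le x y ∧ x ≠ y ∧ ∀ z, X.le x z → X.le z y → z = x ∨ z = y

/-- `X` is (the datum of) a synchronization tree of height at most `k`: the order is a
tree order of height `≤ k` rooted at the distinguished point, and `x ⋖ y` holds iff
`R(x,y)` for a unique binary relation symbol `R`. -/
def IsSyncTree (k : ℕ) (X : KObj V) : Prop :=
  (∀ x, X.le x x) ∧ (∀ x y z, X.le x y → X.le y z → X.le x z) ∧
  (∀ x y, X.le x y → X.le y x → x = y) ∧
  (∀ x, X.le X.pt x) ∧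
  (∀ x : X.carrier, {y | X.le y x}.Finite ∧ {y | X.le y x}.ncard ≤ k + 1 ∧
    ∀ y z, X.le y x → X.le z x → X.le y z ∨ X.le z y) ∧
  (∀ x y, (X.Cover x y ↔ ∃ r, X.rel r x y) ∧
    ∀ r r', X.rel r x y → X.rel r' x y → r = r')

/-- Morphisms of `EM(M_k)`: homomorphisms of pointed Kripke models. -/
def IsHom (X Y : KObj V) (f : X.carrier → Y.carrier) : Prop :=
  f X.pt = Y.pt ∧ (∀ p x, X.val p x → Y.val p (f x)) ∧
  (∀ r x y, X.rel r x y → Y.rel r (f x) (f y))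

/-- Embeddings: morphisms that are injective and reflect all relations. -/
def IsEmb (X Y : KObj V) (f : X.carrier → Y.carrier) : Prop :=
  IsHom X Y f ∧ Function.Injective f ∧
  (∀ p x, Y.val p (f x) → X.val p x) ∧
  (∀ r x y, Y.rel r (f x) (f y) → X.rel r x y)

/-- Paths: objects whose tree order is finite and linear. -/
def IsPath (X : KObj V) : Prop :=
  Finite X.carrier ∧ ∀ x y : X.carrier, X.le x y ∨ X.le y x

/-- Pathwise embeddings. -/
def IsPWEmb (k : ℕ) (X Y : KObj V) (f : X.carrier → Y.carrier) : Prop :=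
  IsHom X Y f ∧ ∀ P : KObj V, IsSyncTree k P → IsPath P →
    ∀ m : P.carrier → X.carrier, IsEmb P X m → IsEmb P Y fun p => f (m p)

/-- Open morphisms: every commutative square of path embeddings over `f` admits a
diagonal filler. -/
def IsOpen (k : ℕ) (X Y : KObj V) (f : X.carrier → Y.carrier) : Prop :=
  ∀ P Q : KObj V, IsSyncTree k P → IsPath P → IsSyncTree k Q → IsPath Q →
    ∀ (i : P.carrier → Q.carrier) (m : P.carrier → X.carrier)
      (n : Q.carrier → Y.carrier),
      IsEmb P Q i → IsEmb P X m → IsEmb Q Y n → (∀ x, n (i x) = f (m x)) →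
      ∃ d : Q.carrier → X.carrier, IsHom Q X d ∧ (∀ x, d (i x) = m x) ∧ ∀ q, f (d q) = n q

end KObj

/-- Validity of a labelled path starting at `x` in the Kripke model `M`. -/
def KValid {V : MVocab} {α : Type} (M : Kripke V α) : α → List (V.R × α) → Prop
  | _, [] => True
  | x, m :: l => M.rel m.1 x m.2 ∧ KValid M m.2 l

/-- The end point of a labelled path starting at `x`. -/
def KEnd {α ρ : Type} (x : α) (l : List (ρ × α)) : α :=
  l.foldl (fun _ m => m.2) x

/-- The `k`-unravelling `F_k(A,a)`: the synchronization tree of paths in `A` of length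
at most `k` starting from `a`, with unary relations read off at the last element and a
binary relation relating a path to its one-step extensions. -/
def FM (V : MVocab) (k : ℕ) {α : Type} (A : Kripke V α) (a : α) : KObj V where
  carrier := {l : List (V.R × α) // KValid A a l ∧ l.length ≤ k}
  pt := ⟨[], by simp [KValid]⟩
  val p s := A.val p (KEnd a s.1)
  rel r s t := ∃ x, t.1 = s.1 ++ [(r, x)]
  le s t := s.1 <+: t.1
/-- A positive bisimulation from `X` to `Y` in `EM(M_k)`: a diagram
`X ⟵p Z₁ ⟶h Z₂ ⟶q Y` in which `p` and `q` are open pathwise embeddings and `h` is a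
bijective morphism. -/
def PosBisimM (V : MVocab) (k : ℕ) (X Y : KObj V) : Prop :=
  ∃ Z₁ Z₂ : KObj V, KObj.IsSyncTree k Z₁ ∧ KObj.IsSyncTree k Z₂ ∧
    ∃ (p : Z₁.carrier → X.carrier) (h : Z₁.carrier → Z₂.carrier)
      (q : Z₂.carrier → Y.carrier),
      KObj.IsPWEmb k Z₁ X p ∧ KObj.IsOpen k Z₁ X p ∧
      KObj.IsHom Z₁ Z₂ h ∧ Function.Bijective h ∧
      KObj.IsPWEmb k Z₂ Y q ∧ KObj.IsOpen k Z₂ Y q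

theorem KValid_append {V : MVocab} {α : Type} (M : Kripke V α) (a : α)
    (l l' : List (V.R × α)) : KValid M a (l ++ l') ↔ KValid M a l ∧ KValid M (KEnd a l) l' := by
  induction l generalizing a with
  | nil => simp [KValid, KEnd]
  | cons m l ih => simp [KValid, ih, KEnd, and_assoc]

theorem KEnd_append {α ρ : Type} (a : α) (l : List (ρ × α)) (m : ρ × α) :
    KEnd a (l ++ [m]) = m.2 := by simp [KEnd]

theorem KEnd_map {α γ ρ : Type} (f : γ → α) (c : γ) (l : List (ρ × γ)) :
    KEnd (f c) (l.map (Prod.map id f)) = f (KEnd c l) := by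
  induction l generalizing c with
  | nil => rfl
  | cons m l ih => exact ih m.2

namespace KObj

variable {V : MVocab}

theorem IsSyncTree.exists_pred {k : ℕ} {X : KObj V} (hX : X.IsSyncTree k) {x y : X.carrier}
    (h : X.le x y) (hne : x ≠ y) : ∃ z r, X.le x z ∧ X.rel r z y := by
  obtain ⟨h1, h2, h3, h4, h5, h6⟩ := hX
  let S := {z | X.le z y ∧ z ≠ y ∧ X.le x z}
  have hS : S.Finite := (h5 y).1.subset fun z hz => hz.1
  have hw : ∃ z ∈ S, ∀ w ∈ S, X.le z w → w = z := by
    let _ : PartialOrder X.carrier :=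
      { le := X.le, le_refl := h1, le_trans := h2, le_antisymm := h3 }
    obtain ⟨z, hz⟩ := hS.exists_maximal ⟨x, h, hne, h1 x⟩
    exact ⟨z, hz.1, fun w hw hzw => h3 _ _ (hz.2 hw hzw) hzw⟩
  obtain ⟨z, hz, hmax⟩ := hw
  have hc : X.Cover z y := by
    refine ⟨hz.1, hz.2.1, fun w hzw hwy => ?_⟩
    by_cases hwe : w = y
    · exact Or.inr hwe
    · exact Or.inl (hmax w ⟨hwy, hwe, h2 _ _ _ hz.2.2 hzw⟩ hzw)
  obtain ⟨r, hr⟩ := (h6 z y).1.1 hc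
  exact ⟨z, r, hz.2.2, hr⟩

theorem IsSyncTree.cover {k : ℕ} {X : KObj V} (hX : X.IsSyncTree k) {x y : X.carrier} {r : V.R}
    (h : X.rel r x y) : X.Cover x y := (hX.2.2.2.2.2 x y).1.2 ⟨r, h⟩

/-- induction along the order -/
theorem IsSyncTree.le_induct {k : ℕ} {X : KObj V} (hX : X.IsSyncTree k) {x : X.carrier}
    {C : X.carrier → Prop} (h0 : C x) (hs : ∀ r z y, X.rel r z y → C z → C y) :
    ∀ y, X.le x y → C y := by
  suffices H : ∀ n y, {z | X.le z y}.ncard = n → X.le x y → C y from fun y => H _ y rfl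
  intro n
  induction n using Nat.strong_induction_on with
  | _ n ih =>
    intro y hn hxy
    by_cases hne : x = y
    · exact hne ▸ h0
    obtain ⟨z, r, hxz, hr⟩ := hX.exists_pred hxy hne
    have hc := hX.cover hr
    refine hs r z y hr (ih _ ?_ z rfl hxz)
    rw [← hn]
    refine Set.ncard_lt_ncard ?_ (hX.2.2.2.2.1 y).1
    refine ⟨fun w hw => hX.2.1 _ _ _ hw hc.1, fun hsub => hc.2.1 ?_⟩
    exact hX.2.2.1 _ _ hc.1 (hsub (hX.1 y))

theorem IsSyncTree.unique_pred {k : ℕ} {X : KObj V} (hX : X.IsSyncTree k) {w z y : X.carrier}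
    {r r' : V.R} (h : X.rel r w y) (h' : X.rel r' z y) : w = z ∧ r = r' := by
  have e : w = z := by
    have c := hX.cover h
    have c' := hX.cover h'
    rcases (hX.2.2.2.2.1 y).2.2 w z c.1 c'.1 with hl | hl
    · rcases c.2.2 z hl c'.1 with e | e
      · exact e.symm
      · exact absurd e c'.2.1
    · rcases c'.2.2 w hl c.1 with e | e
      · exact e
      · exact absurd e c.2.1
  subst e
  exact ⟨rfl, (hX.2.2.2.2.2 w y).2 r r' h h'⟩

/-- The principal down-set of `z`. -/
def sub (X : KObj V) (z : X.carrier) (h : X.le X.pt z) : KObj V where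
  carrier := {y // X.le y z}
  pt := ⟨X.pt, h⟩
  val p y := X.val p y.1
  rel r y w := X.rel r y.1 w.1
  le y w := X.le y.1 w.1

theorem sub_sync {k : ℕ} {X : KObj V} (hX : X.IsSyncTree k) (z : X.carrier) (h : X.le X.pt z) :
    (X.sub z h).IsSyncTree k := by
  obtain ⟨h1, h2, h3, h4, h5, h6⟩ := hX
  refine ⟨fun x => h1 x.1, fun x y w => h2 x.1 y.1 w.1,
    fun x y a b => Subtype.ext (h3 _ _ a b), fun x => h4 x.1, ?_, ?_⟩
  · intro x
    have hm : Set.MapsTo Subtype.val {y : (X.sub z h).carrier | (X.sub z h).le y x}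
      {y | X.le y x.1} := fun y hy => hy
    have hi : Set.InjOn (Subtype.val : (X.sub z h).carrier → X.carrier)
      {y : (X.sub z h).carrier | (X.sub z h).le y x} := Subtype.val_injective.injOn
    refine ⟨Set.Finite.of_injOn hm hi (h5 x.1).1, ?_, fun y w => (h5 x.1).2.2 y.1 w.1⟩
    exact (Set.ncard_le_ncard_of_injOn _ hm hi (h5 x.1).1).trans (h5 x.1).2.1
  · intro x y
    refine ⟨?_, fun r r' => (h6 x.1 y.1).2 r r'⟩
    refine Iff.trans ?_ (h6 x.1 y.1).1
    constructor
    · rintro ⟨a, b, c⟩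
      refine ⟨a, fun e => b (Subtype.ext e), fun w hw hw' => ?_⟩
      rcases c ⟨w, h2 _ _ _ hw' y.2⟩ hw hw' with e | e
      · exact Or.inl (congrArg Subtype.val e)
      · exact Or.inr (congrArg Subtype.val e)
    · rintro ⟨a, b, c⟩
      refine ⟨a, fun e => b (congrArg Subtype.val e), fun w hw hw' => ?_⟩
      rcases c w.1 hw hw' with e | e
      · exact Or.inl (Subtype.ext e)
      · exact Or.inr (Subtype.ext e)

theorem sub_path {k : ℕ} {X : KObj V} (hX : X.IsSyncTree k) (z : X.carrier) (h : X.le X.pt z) :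
    (X.sub z h).IsPath :=
  ⟨(hX.2.2.2.2.1 z).1.to_subtype, fun x y => (hX.2.2.2.2.1 z).2.2 x.1 y.1 x.2 y.2⟩

theorem sub_emb {X : KObj V} (z : X.carrier) (h : X.le X.pt z) :
    IsEmb (X.sub z h) X Subtype.val :=
  ⟨⟨rfl, fun _ _ h => h, fun _ _ _ h => h⟩, Subtype.val_injective, fun _ _ h => h,
    fun _ _ _ h => h⟩

end KObj

open KObj

theorem FM_sync (V : MVocab) (k : ℕ) {α : Type} (A : Kripke V α) (a : α) :
    (FM V k A a).IsSyncTree k := by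
  refine ⟨fun x => List.prefix_rfl, fun x y z => List.IsPrefix.trans,
    fun x y h h' => Subtype.ext (h.eq_of_length_le h'.length_le), fun x => List.nil_prefix, ?_, ?_⟩
  · intro s
    have hm : Set.MapsTo (fun t : (FM V k A a).carrier => t.1.length)
        {t | (FM V k A a).le t s} (Finset.range (k+1) : Set ℕ) := by
      intro t ht
      have := t.2.2
      simp only [Finset.coe_range, Set.mem_Iio]
      omega
    have hi : Set.InjOn (fun t : (FM V k A a).carrier => t.1.length)
        {t | (FM V k A a).le t s} := by
      intro t ht t' ht' e
      exact Subtype.ext ((List.prefix_of_prefix_length_le ht ht' (le_of_eq e)).eq_of_length e)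
    refine ⟨Set.Finite.of_injOn hm hi (Finset.finite_toSet _), ?_, ?_⟩
    · refine (Set.ncard_le_ncard_of_injOn _ hm hi (Finset.finite_toSet _)).trans ?_
      rw [Set.ncard_coe_finset]; simp
    · intro y z hy hz
      exact List.prefix_or_prefix_of_prefix hy hz
  · intro s t
    constructor
    · constructor
      · rintro ⟨⟨l, hl⟩, hne, hb⟩
        rcases l with _ | ⟨m, l⟩
        · exact absurd (Subtype.ext (by simpa using hl)) hne
        have e : t.1 = (s.1 ++ [m]) ++ l := by simp [← hl]
        have hv : KValid A a (s.1 ++ [m]) := by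
          have := t.2.1
          rw [e, KValid_append] at this
          exact this.1
        have hlen : (s.1 ++ [m]).length ≤ k := by
          have := t.2.2
          rw [e, List.length_append] at this
          omega
        rcases hb ⟨s.1 ++ [m], hv, hlen⟩ (List.prefix_append _ _) ⟨l, e.symm⟩ with h | h
        · have := congrArg (fun t => t.1.length) h
          simp at this
        · exact ⟨m.1, m.2, (congrArg Subtype.val h).symm⟩
      · rintro ⟨r, x, h⟩
        refine ⟨⟨_, h.symm⟩, fun e => ?_, fun z hz hz' => ?_⟩
        · have := congrArg List.length h
          rw [e] at this
          simp at this
        · have h1 := List.IsPrefix.length_le hz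
          have h2 := List.IsPrefix.length_le hz'
          have h3 := congrArg List.length h
          simp at h3
          rcases Nat.lt_or_ge s.1.length z.1.length with hlt | hge
          · exact Or.inr (Subtype.ext (List.IsPrefix.eq_of_length_le hz' (by omega)))
          · exact Or.inl (Subtype.ext (List.IsPrefix.eq_of_length_le hz (by omega)).symm)
    · rintro r r' ⟨x, h⟩ ⟨x', h'⟩
      rw [h] at h'
      simpa using (List.append_cancel_left h') |> fun h => by simpa using And.left (by simpa using h)

/-- Homs from sync trees into unravellings are monotone, strictly so in length. -/
theorem FM_mono {V : MVocab} {k : ℕ} {α : Type} {A : Kripke V α} {a : α} {X : KObj V}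
    (hX : X.IsSyncTree k) {g : X.carrier → (FM V k A a).carrier} (hg : IsHom X (FM V k A a) g)
    {x y : X.carrier} (h : X.le x y) :
    (g x).1 <+: (g y).1 ∧ (x = y ∨ (g x).1.length < (g y).1.length) := by
  refine hX.le_induct (x := x)
    (C := fun y => (g x).1 <+: (g y).1 ∧ (x = y ∨ (g x).1.length < (g y).1.length))
    ⟨List.prefix_rfl, Or.inl rfl⟩ ?_ y h
  rintro r z y hr ⟨h1, h2⟩
  obtain ⟨c, hc⟩ := hg.2.2 r z y hr
  have hp : (g z).1 <+: (g y).1 := ⟨_, hc.symm⟩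
  refine ⟨h1.trans hp, Or.inr ?_⟩
  have := h1.length_le
  rw [hc]; simp; omega

/-! ### From games to bisimulations -/

section lift

variable {V : MVocab} {k : ℕ} {α γ : Type} {A : Kripke V α} {C : Kripke V γ} {f : γ → α}
  {rank : γ → ℕ}

theorem KValid_map (hf : ∀ r c c', C.rel r c c' → A.rel r (f c) (f c')) (c : γ)
    (l : List (V.R × γ)) (h : KValid C c l) : KValid A (f c) (l.map (Prod.map id f)) := by
  induction l generalizing c with
  | nil => trivial
  | cons m l ih => exact ⟨hf _ _ _ h.1, ih _ h.2⟩

theorem rank_end (hr : ∀ r c c', C.rel r c c' → rank c = rank c' + 1) (c : γ)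
    (l : List (V.R × γ)) (h : KValid C c l) : rank c = rank (KEnd c l) + l.length := by
  induction l generalizing c with
  | nil => rfl
  | cons m l ih =>
    have h1 := hr _ _ _ h.1
    have h2 := ih _ h.2
    simp only [List.length_cons]
    change _ = rank (KEnd m.2 l) + _
    omega

theorem lift_list (hr : ∀ r c c', C.rel r c c' → rank c = rank c' + 1)
    (hl : ∀ r c x, 0 < rank c → A.rel r (f c) x → ∃ c', C.rel r c c' ∧ f c' = x) (c : γ)
    (l : List (V.R × α)) (h : KValid A (f c) l) (hk : l.length ≤ rank c) :
    ∃ L, KValid C c L ∧ L.map (Prod.map id f) = l := by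
  induction l generalizing c with
  | nil => exact ⟨[], trivial, rfl⟩
  | cons m l ih =>
    simp only [List.length_cons] at hk
    obtain ⟨c', h1, h2⟩ := hl m.1 c m.2 (by omega) h.1
    have h3 := hr _ _ _ h1
    obtain ⟨L, h4, h5⟩ := ih c' (by rw [h2]; exact h.2) (by omega)
    exact ⟨(m.1, c') :: L, ⟨h1, h4⟩, by simp [h5, h2]⟩

/-- The map on unravellings. -/
def FMmap (hf : ∀ r c c', C.rel r c c' → A.rel r (f c) (f c')) (c : γ) :
    (FM V k C c).carrier → (FM V k A (f c)).carrier :=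
  fun l => ⟨l.1.map (Prod.map id f), KValid_map hf c l.1 l.2.1, by
    rw [List.length_map]; exact l.2.2⟩

variable (hf : ∀ r c c', C.rel r c c' → A.rel r (f c) (f c'))

theorem FMmap_length (c : γ) (l : (FM V k C c).carrier) :
    (FMmap (k := k) hf c l).1.length = l.1.length := List.length_map _

theorem FMmap_hom (hv : ∀ p c, C.val p c ↔ A.val p (f c)) (c : γ) :
    IsHom (FM V k C c) (FM V k A (f c)) (FMmap hf c) := by
  refine ⟨rfl, fun p l h => ?_, ?_⟩
  · change A.val p (KEnd (f c) (l.1.map _))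
    rw [KEnd_map]
    exact (hv _ _).1 h
  · rintro r l l' ⟨x, h⟩
    refine ⟨f x, ?_⟩
    change l'.1.map _ = l.1.map _ ++ _
    rw [h]; simp

theorem FMmap_pw (hv : ∀ p c, C.val p c ↔ A.val p (f c)) (c : γ) :
    IsPWEmb k (FM V k C c) (FM V k A (f c)) (FMmap hf c) := by
  have H := FMmap_hom (k := k) hf hv c
  refine ⟨H, fun P hP hPP m hm => ⟨⟨?_, ?_, ?_⟩, ?_, ?_, ?_⟩⟩
  · change FMmap hf c (m _) = _
    rw [hm.1.1]; exact H.1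
  · exact fun p x h => H.2.1 _ _ (hm.1.2.1 _ _ h)
  · exact fun r x y h => H.2.2 _ _ _ (hm.1.2.2 _ _ _ h)
  · intro x y e
    have e' := congrArg (fun l => l.1.length) e
    simp only [FMmap_length] at e'
    rcases hPP.2 x y with h | h
    · rcases (FM_mono hP hm.1 h).2 with h | h
      · exact h
      · omega
    · rcases (FM_mono hP hm.1 h).2 with h | h
      · exact h.symm
      · omega
  · intro p x h
    apply hm.2.2.1
    change A.val p (KEnd (f c) ((m x).1.map _)) at h
    rw [KEnd_map] at h
    exact (hv _ _).2 h
  · rintro r x y ⟨x', h⟩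
    apply hm.2.2.2
    have hlen := congrArg List.length h
    rw [List.length_append, FMmap_length, FMmap_length, List.length_singleton] at hlen
    have hpre : (m x).1 <+: (m y).1 := by
      rcases hPP.2 x y with h | h
      · exact (FM_mono hP hm.1 h).1
      · have := (FM_mono hP hm.1 h).1.length_le
        omega
    obtain ⟨l, hl⟩ := hpre
    have hl1 : l.length = 1 := by
      rw [← hl, List.length_append] at hlen
      omega
    obtain ⟨w, rfl⟩ := List.length_eq_one_iff.1 hl1
    refine ⟨w.2, ?_⟩
    rw [← hl]
    change (m y).1.map _ = (m x).1.map _ ++ _ at h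
    rw [← hl, List.map_append] at h
    have := List.append_cancel_left h
    simp [Prod.ext_iff] at this
    rw [← this.1]

theorem path_top {P : KObj V} (hP : P.IsSyncTree k) (hPP : P.IsPath) : ∃ t, ∀ x, P.le x t := by
  let _ : PartialOrder P.carrier :=
      { le := P.le, le_refl := hP.1, le_trans := hP.2.1, le_antisymm := hP.2.2.1 }
  have := hPP.1
  obtain ⟨t, ht⟩ := (Set.finite_univ (α := P.carrier)).exists_maximal ⟨P.pt, trivial⟩
  refine ⟨t, fun x => ?_⟩
  rcases hPP.2 x t with h | h
  · exact h
  · exact ht.2 trivial h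

theorem FMmap_open (hv : ∀ p c, C.val p c ↔ A.val p (f c))
    (hr : ∀ r c c', C.rel r c c' → rank c = rank c' + 1)
    (hl : ∀ r c x, 0 < rank c → A.rel r (f c) x → ∃ c', C.rel r c c' ∧ f c' = x)
    (c : γ) (hc : rank c = k) :
    IsOpen k (FM V k C c) (FM V k A (f c)) (FMmap hf c) := by
  intro P Q hP hPP hQ hQP i m n hi hm hn hcomm
  obtain ⟨t, ht⟩ := path_top hP hPP
  obtain ⟨u, hu⟩ := path_top hQ hQP
  have hpre : ∀ q, (n q).1 <+: (n u).1 := fun q => (FM_mono hQ hn.1 (hu q)).1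
  obtain ⟨l, hl'⟩ := hpre (i t)
  rw [hcomm] at hl'
  change (m t).1.map _ ++ l = _ at hl'
  have hval := (n u).2.1
  have hlen := (n u).2.2
  rw [← hl', KValid_append, KEnd_map] at hval
  rw [← hl', List.length_append, List.length_map] at hlen
  have hrk := rank_end hr c (m t).1 (m t).2.1
  obtain ⟨L0, hL0, hL0m⟩ := lift_list hr hl _ l hval.2 (by omega)
  obtain ⟨L, rfl⟩ : ∃ L, L = (m t).1 ++ L0 := ⟨_, rfl⟩
  set L := (m t).1 ++ L0 with hLdef
  have hLv : KValid C c L := (KValid_append _ _ _ _).2 ⟨(m t).2.1, hL0⟩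
  have hLm : L.map (Prod.map id f) = (n u).1 := by
    rw [hLdef, List.map_append, hL0m, hl']
  have hLlen : L.length = (n u).1.length := by rw [← hLm, List.length_map]
  have htake : ∀ j, KValid C c (L.take j) := fun j => by
    have := hLv
    rw [← List.take_append_drop j L, KValid_append] at this
    exact this.1
  let d : Q.carrier → (FM V k C c).carrier := fun q =>
    ⟨L.take (n q).1.length, htake _, by
      rw [List.length_take]; exact (min_le_left _ _).trans (n q).2.2⟩
  have hfd : ∀ q, FMmap hf c (d q) = n q := fun q => by
    apply Subtype.ext
    change (L.take (n q).1.length).map _ = _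
    rw [List.map_take, hLm]
    exact (List.prefix_iff_eq_take.1 (hpre q)).symm
  refine ⟨d, ⟨?_, ?_, ?_⟩, ?_, hfd⟩
  · apply Subtype.ext
    change L.take (n Q.pt).1.length = []
    rw [hn.1.1]; rfl
  · intro p q h
    have h' := hn.1.2.1 p q h
    rw [← hfd q] at h'
    change A.val p (KEnd (f c) ((d q).1.map _)) at h'
    rw [KEnd_map] at h'
    exact (hv _ _).2 h'
  · intro r q q' h
    obtain ⟨x, hx⟩ := hn.1.2.2 r q q' h
    have hx2 := congrArg List.length hx
    rw [List.length_append, List.length_singleton] at hx2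
    have hle := (hpre q').length_le
    have hlt : (n q).1.length < L.length := by omega
    have e : (d q').1 = (d q).1 ++ [L[(n q).1.length]] := by
      change L.take (n q').1.length = L.take (n q).1.length ++ _
      rw [hx2, List.take_succ_eq_append_getElem hlt]
    have e2 := congrArg (List.map (Prod.map id f)) e
    rw [List.map_append] at e2
    have e3 := congrArg Subtype.val (hfd q')
    have e4 := congrArg Subtype.val (hfd q)
    change (d q').1.map _ = _ at e3
    change (d q).1.map _ = _ at e4
    rw [e3, e4, hx] at e2
    have := List.append_cancel_left e2
    simp [Prod.ext_iff] at this
    refine ⟨(L[(n q).1.length]).2, ?_⟩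
    rw [e, this.1]
  · intro x
    apply Subtype.ext
    change L.take (n (i x)).1.length = _
    rw [hcomm, FMmap_length]
    exact (List.prefix_iff_eq_take.1
      ((FM_mono hP hm.1 (ht x)).1.trans (List.prefix_append _ _))).symm

end lift

theorem PMWin_val {V : MVocab} {α β : Type} {A : Kripke V α} {B : Kripke V β} {n : ℕ} {x : α}
    {y : β} (h : PMWin A B n x y) : ∀ p, A.val p x → B.val p y := by
  cases n with
  | zero => exact h
  | succ n => exact h.1

theorem bisim_of_win {V : MVocab} {α β : Type} (A : Kripke V α) (a : α) (B : Kripke V β) (b : β)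
    (k : ℕ) (h : PMWin A B k a b) : PosBisimM V k (FM V k A a) (FM V k B b) := by
  let γ := {c : α × β × ℕ // PMWin A B c.2.2 c.1 c.2.1}
  let R : V.R → γ → γ → Prop := fun r c c' => c.1.2.2 = c'.1.2.2 + 1 ∧
    A.rel r c.1.1 c'.1.1 ∧ B.rel r c.1.2.1 c'.1.2.1
  let C₁ : Kripke V γ := ⟨fun p c => A.val p c.1.1, R⟩
  let C₂ : Kripke V γ := ⟨fun p c => B.val p c.1.2.1, R⟩
  let c : γ := ⟨(a, b, k), h⟩
  have hV : ∀ (c : γ) l, KValid C₁ c l ↔ KValid C₂ c l := by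
    intro c l
    induction l generalizing c with
    | nil => exact Iff.rfl
    | cons m l ih => exact and_congr Iff.rfl (ih _)
  have hf₁ : ∀ r c c', C₁.rel r c c' → A.rel r c.1.1 c'.1.1 := fun r c c' h => h.2.1
  have hf₂ : ∀ r c c', C₂.rel r c c' → B.rel r c.1.2.1 c'.1.2.1 := fun r c c' h => h.2.2
  let rank : γ → ℕ := fun c => c.1.2.2
  refine ⟨FM V k C₁ c, FM V k C₂ c, FM_sync .., FM_sync ..,
    FMmap (f := fun c : γ => c.1.1) hf₁ c, fun l => ⟨l.1, (hV _ _).1 l.2.1, l.2.2⟩,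
    FMmap (f := fun c : γ => c.1.2.1) hf₂ c,
    FMmap_pw (f := fun c : γ => c.1.1) hf₁ (fun _ _ => Iff.rfl) c,
    FMmap_open (f := fun c : γ => c.1.1) (rank := rank) hf₁ (fun _ _ => Iff.rfl)
      (fun _ _ _ h => h.1) ?_ c rfl, ⟨rfl, ?_, ?_⟩, ⟨?_, ?_⟩,
    FMmap_pw (f := fun c : γ => c.1.2.1) hf₂ (fun _ _ => Iff.rfl) c,
    FMmap_open (f := fun c : γ => c.1.2.1) (rank := rank) hf₂ (fun _ _ => Iff.rfl)
      (fun _ _ _ h => h.1) ?_ c rfl⟩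
  · rintro r ⟨⟨x, y, n⟩, hw⟩ x' hpos hx
    cases n with
    | zero => exact absurd hpos (lt_irrefl 0)
    | succ n =>
      obtain ⟨y', hy, hw'⟩ := hw.2.1 r x' hx
      exact ⟨⟨(x', y', n), hw'⟩, ⟨rfl, hx, hy⟩, rfl⟩
  · intro p l hl
    exact PMWin_val (KEnd c l.1).2 p hl
  · exact fun r x y h => h
  · intro x y e
    have e' : x.1 = y.1 := congrArg (fun l : (FM V k C₂ c).carrier => l.1) e
    exact Subtype.ext e'
  · exact fun l => ⟨⟨l.1, (hV _ _).2 l.2.1, l.2.2⟩, rfl⟩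
  · rintro r ⟨⟨x, y, n⟩, hw⟩ y' hpos hy
    cases n with
    | zero => exact absurd hpos (lt_irrefl 0)
    | succ n =>
      obtain ⟨x', hx, hw'⟩ := hw.2.2 r y' hy
      exact ⟨⟨(x', y', n), hw'⟩, ⟨rfl, hx, hy⟩, rfl⟩

/-! ### From bisimulations to games -/

theorem pw_val {V : MVocab} {k : ℕ} {X Y : KObj V} (hX : X.IsSyncTree k)
    {f : X.carrier → Y.carrier} (hf : IsPWEmb k X Y f) (p : V.P) (z : X.carrier)
    (h : Y.val p (f z)) : X.val p z :=
  (hf.2 (X.sub z (hX.2.2.2.1 z)) (sub_sync hX z _) (sub_path hX z _) _ (sub_emb z _)).2.2.1 p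
    ⟨z, hX.1 z⟩ h

theorem open_lift {V : MVocab} {k : ℕ} {X : KObj V} (hX : X.IsSyncTree k) {α : Type}
    {A : Kripke V α} {a : α} {f : X.carrier → (FM V k A a).carrier}
    (hf : IsPWEmb k X (FM V k A a) f) (ho : IsOpen k X (FM V k A a) f) (z : X.carrier)
    (hlen : (f z).1.length < k) (r : V.R) (x : α) (hx : A.rel r (KEnd a (f z).1) x) :
    ∃ z', X.rel r z z' ∧ (f z').1 = (f z).1 ++ [(r, x)] := by
  have hY := FM_sync V k A a
  let s : (FM V k A a).carrier := ⟨(f z).1 ++ [(r, x)],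
    (KValid_append _ _ _ _).2 ⟨(f z).2.1, hx, trivial⟩, by simp; omega⟩
  have hzs : (FM V k A a).le (f z) s := List.prefix_append _ _
  let P := X.sub z (hX.2.2.2.1 z)
  let Q := (FM V k A a).sub s (hY.2.2.2.1 s)
  have hemb := hf.2 P (sub_sync hX z _) (sub_path hX z _) _ (sub_emb z _)
  let i : P.carrier → Q.carrier := fun w =>
    ⟨f w.1, hY.2.1 _ _ _ (FM_mono hX hf.1 w.2).1 hzs⟩
  have hi : IsEmb P Q i := by
    refine ⟨⟨Subtype.ext hemb.1.1, hemb.1.2.1, hemb.1.2.2⟩, ?_, hemb.2.2.1, hemb.2.2.2⟩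
    intro w w' e
    exact hemb.2.1 (congrArg Subtype.val e)
  obtain ⟨d, hd, hd1, hd2⟩ := ho P Q (sub_sync hX z _) (sub_path hX z _) (sub_sync hY s _)
    (sub_path hY s _) i Subtype.val Subtype.val hi (sub_emb z _) (sub_emb s _) (fun _ => rfl)
  refine ⟨d ⟨s, hY.1 s⟩, ?_, congrArg Subtype.val (hd2 ⟨s, hY.1 s⟩)⟩
  have h1 := hd.2.2 r (i ⟨z, hX.1 z⟩) ⟨s, hY.1 s⟩ ⟨x, rfl⟩
  have h2 : d (i ⟨z, hX.1 z⟩) = z := hd1 ⟨z, hX.1 z⟩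
  exact h2 ▸ h1

theorem win_of_bisim {V : MVocab} {α β : Type} (A : Kripke V α) (a : α) (B : Kripke V β) (b : β)
    (k : ℕ) (h : PosBisimM V k (FM V k A a) (FM V k B b)) : PMWin A B k a b := by
  obtain ⟨Z₁, Z₂, hZ₁, hZ₂, p, h, q, hp, hpo, hh, hb, hq, hqo⟩ := h
  have hlen : ∀ z, (p z).1.length = (q (h z)).1.length := by
    intro z
    refine hZ₁.le_induct (x := Z₁.pt) (C := fun z => (p z).1.length = (q (h z)).1.length)
      ?_ ?_ z (hZ₁.2.2.2.1 z)
    · rw [hh.1, hq.1.1, hp.1.1]; rfl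
    · intro r z y hr e
      obtain ⟨x, hx⟩ := hp.1.2.2 r z y hr
      obtain ⟨x', hx'⟩ := hq.1.2.2 r _ _ (hh.2.2 r z y hr)
      rw [hx, hx']; simp [e]
  have hval : ∀ z P, A.val P (KEnd a (p z).1) → B.val P (KEnd b (q (h z)).1) :=
    fun z P hP => hq.1.2.1 P _ (hh.2.1 P _ (pw_val hZ₁ hp P z hP))
  have hrelB : ∀ r z z', Z₁.rel r z z' → B.rel r (KEnd b (q (h z)).1) (KEnd b (q (h z')).1) := by
    intro r z y hr
    obtain ⟨x', hx'⟩ := hq.1.2.2 r _ _ (hh.2.2 r z y hr)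
    have := (q (h y)).2.1
    rw [hx', KValid_append] at this
    rw [hx', KEnd_append]
    exact this.2.1
  have hrelA : ∀ r z z', Z₁.rel r z z' → A.rel r (KEnd a (p z).1) (KEnd a (p z').1) := by
    intro r z y hr
    obtain ⟨x', hx'⟩ := hp.1.2.2 r _ _ hr
    have := (p y).2.1
    rw [hx', KValid_append] at this
    rw [hx', KEnd_append]
    exact this.2.1
  have hstep : ∀ r z z', Z₁.rel r z z' → (p z').1.length = (p z).1.length + 1 := by
    intro r z y hr
    obtain ⟨x', hx'⟩ := hp.1.2.2 r _ _ hr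
    rw [hx']; simp
  have main : ∀ n z, (p z).1.length + n = k →
      PMWin A B n (KEnd a (p z).1) (KEnd b (q (h z)).1) := by
    intro n
    induction n with
    | zero => exact fun z _ => hval z
    | succ n ih =>
      intro z hz
      refine ⟨hval z, fun r x' hx => ?_, fun r y' hy => ?_⟩
      · obtain ⟨z', hz', e⟩ := open_lift hZ₁ hp hpo z (by omega) r x' hx
        have := hstep _ _ _ hz'
        have hw := ih z' (by omega)
        rw [e, KEnd_append] at hw
        exact ⟨_, hrelB _ _ _ hz', hw⟩
      · obtain ⟨z₂, hz₂, e⟩ := open_lift hZ₂ hq hqo (h z) (by have := hlen z; omega) r y' hy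
        obtain ⟨z', rfl⟩ := hb.2 z₂
        have hne : Z₁.pt ≠ z' := by
          rintro rfl
          have hc := hZ₂.cover hz₂
          rw [hh.1] at hc
          exact hc.2.1 (hZ₂.2.2.1 _ _ hc.1 (hZ₂.2.2.2.1 _))
        obtain ⟨w, r', -, hw⟩ := hZ₁.exists_pred (hZ₁.2.2.2.1 z') hne
        obtain ⟨e1, rfl⟩ := hZ₂.unique_pred (hh.2.2 _ _ _ hw) hz₂
        obtain rfl := hb.1 e1
        have := hstep _ _ _ hw
        have hw' := ih z' (by omega)
        rw [e, KEnd_append] at hw'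
        exact ⟨_, hrelA _ _ _ hw, hw'⟩
  have := main k Z₁.pt (by rw [hp.1.1]; exact Nat.zero_add k)
  rwa [hh.1, hp.1.1, hq.1.1] at this

/-- there exists a positive bisimulation from `F_k(A,a)` to `F_k(B,b)` in
`EM(M_k)` if, and only if, Duplicator has a winning strategy in the positive `k`-round
bisimulation game from `(A,a)` to `(B,b)`. -/
theorem positive_bisimulation_iff_positive_bisimulation_game
    (V : MVocab) [Finite V.P] [Finite V.R] {α β : Type}
    (A : Kripke V α) (a : α) (B : Kripke V β) (b : β) (k : ℕ) :
    PosBisimM V k (FM V k A a) (FM V k B b) ↔ PMWin A B k a b := by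
  exact ⟨win_of_bisim A a B b k, bisim_of_win A a B b k⟩
end

section
/- In any arboreal category, if there exists a positive back-and-forth system from X to Y, then there exists a strong positive back-and-forth system from X to Y. -/
open CategoryTheory CategoryTheory.Limits

universe v u

variable {C : Type u} [Category.{v} C]

/-- A stable proper factorisation system `(Q, M)` on a category `C`:
every morphism factors as a quotient followed by an embedding, the two classes
determine each other by lifting properties, quotients are epimorphisms, embeddings
are monomorphisms, and pullbacks of quotients along embeddings exist and are
quotients. -/
structure PreArboreal (C : Type u) [Category.{v} C] : Type (max u (v + 1)) where
  /-- The class of quotients. -/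
  IsQ : MorphismProperty C
  /-- The class of embeddings. -/
  IsM : MorphismProperty C
  factor : ∀ {X Y : C} (f : X ⟶ Y),
    ∃ (Z : C) (e : X ⟶ Z) (m : Z ⟶ Y), IsQ e ∧ IsM m ∧ e ≫ m = f
  q_llp : ∀ {X Y : C} (f : X ⟶ Y),
    IsQ f ↔ ∀ {X' Y' : C} (g : X' ⟶ Y'), IsM g → HasLiftingProperty f g
  m_rlp : ∀ {X Y : C} (g : X ⟶ Y),
    IsM g ↔ ∀ {X' Y' : C} (f : X' ⟶ Y'), IsQ f → HasLiftingProperty f g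
  q_epi : ∀ {X Y : C} (f : X ⟶ Y), IsQ f → Epi f
  m_mono : ∀ {X Y : C} (f : X ⟶ Y), IsM f → Mono f
  stable : ∀ {X Y Z : C} (e : X ⟶ Z) (m : Y ⟶ Z), IsQ e → IsM m →
    ∃ (W : C) (p : W ⟶ X) (q : W ⟶ Y), IsPullback p q e m ∧ IsQ q

namespace PreArboreal

/-- A representative of an `M`-subobject of `X`: an embedding into `X`. -/
structure MSub (A : PreArboreal C) (X : C) : Type (max u v) where
  dom : C
  hom : dom ⟶ X
  emb : A.IsM hom

/-- The preorder on `M`-subobjects of `X`. -/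
def mle (A : PreArboreal C) {X : C} (f g : A.MSub X) : Prop :=
  ∃ h : f.dom ⟶ g.dom, h ≫ g.hom = f.hom

/-- Equivalence of `M`-subobjects (they represent the same element of the poset
`ΣM X`). -/
def mequiv (A : PreArboreal C) {X : C} (f g : A.MSub X) : Prop :=
  A.mle f g ∧ A.mle g f

/-- A path: an object whose poset of `M`-subobjects is a finite linear order. -/
def IsPathObj (A : PreArboreal C) (P : C) : Prop :=
  (∀ f g : A.MSub P, A.mle f g ∨ A.mle g f) ∧
  ∃ (n : ℕ) (l : Fin n → A.MSub P), ∀ f : A.MSub P, ∃ i, A.mequiv f (l i)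

/-- A path embedding into `X`, i.e. an element of the tree `P X`. -/
structure PathsOver (A : PreArboreal C) (X : C) : Type (max u v) where
  sub : A.MSub X
  path : IsPathObj A sub.dom

instance (A : PreArboreal C) (X : C) : Category (PathsOver A X) where
  Hom p q := {h : p.sub.dom ⟶ q.sub.dom // h ≫ q.sub.hom = p.sub.hom}
  id p := ⟨𝟙 _, Category.id_comp _⟩
  comp f g := ⟨f.1 ≫ g.1, by rw [Category.assoc, g.2, f.2]⟩
  id_comp f := Subtype.ext (Category.id_comp _)
  comp_id f := Subtype.ext (Category.comp_id _)
  assoc f g h := Subtype.ext (Category.assoc _ _ _)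

/-- The tree-indexed diagram of the paths embedding into `X`. -/
def pathsDiagram (A : PreArboreal C) (X : C) : PathsOver A X ⥤ C where
  obj p := p.sub.dom
  map f := f.1
  map_id _ := rfl
  map_comp _ _ := rfl

/-- The canonical cocone over the diagram of paths embedding into `X`, with vertex
`X`. -/
def pathsCocone (A : PreArboreal C) (X : C) : Cocone (pathsDiagram A X) where
  pt := X
  ι :=
    { app := fun p => p.sub.hom
      naturality := fun p q f => by
        show f.1 ≫ q.sub.hom = p.sub.hom ≫ 𝟙 X
        rw [Category.comp_id, f.2] }

/-- The order on the tree `P X` of path embeddings into `X` (on representatives). -/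
def ple (A : PreArboreal C) {X : C} (p q : PathsOver A X) : Prop := A.mle p.sub q.sub

/-- The strict order on `P X`. -/
def plt (A : PreArboreal C) {X : C} (p q : PathsOver A X) : Prop :=
  A.ple p q ∧ ¬ A.ple q p

/-- The covering relation `⋖` of the tree `P X`. -/
def pcov (A : PreArboreal C) {X : C} (p q : PathsOver A X) : Prop :=
  A.plt p q ∧ ∀ z : PathsOver A X, ¬ (A.plt p z ∧ A.plt z q)

/-- The root `⊥_X` of the tree `P X` (as a predicate on representatives). -/
def pRoot (A : PreArboreal C) {X : C} (p : PathsOver A X) : Prop :=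
  ∀ q : PathsOver A X, A.ple p q

end PreArboreal

/-- An arboreal category: a category with a stable proper factorisation system such
that coproducts of paths exist and paths are connected, quotients between paths satisfy
the 2-out-of-3 property, and every object is the colimit of the paths embedding into
it. -/
structure Arboreal (C : Type u) [Category.{v} C] extends PreArboreal C where
  pathCoproducts : ∀ (ι : Type v) (F : ι → C),
    (∀ i, toPreArboreal.IsPathObj (F i)) → HasCoproduct F
  pathConnected : ∀ P : C, toPreArboreal.IsPathObj P →
    ∀ (ι : Type v) (F : ι → C), Nonempty ι → (∀ i, toPreArboreal.IsPathObj (F i)) →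
      ∀ (c : Cofan F), IsColimit c → ∀ g : P ⟶ c.pt,
        ∃ (i : ι) (g' : P ⟶ F i), g' ≫ c.inj i = g
  twoOfThree : ∀ {P P' P'' : C}, toPreArboreal.IsPathObj P →
    toPreArboreal.IsPathObj P' → toPreArboreal.IsPathObj P'' →
    ∀ (f : P ⟶ P') (g : P' ⟶ P''),
      (toPreArboreal.IsQ f → toPreArboreal.IsQ g → toPreArboreal.IsQ (f ≫ g)) ∧
      (toPreArboreal.IsQ f → toPreArboreal.IsQ (f ≫ g) → toPreArboreal.IsQ g) ∧
      (toPreArboreal.IsQ g → toPreArboreal.IsQ (f ≫ g) → toPreArboreal.IsQ f)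
  pathGenerated : ∀ X : C,
    Nonempty (IsColimit (PreArboreal.pathsCocone toPreArboreal X))

namespace PreArboreal

/-- There is a quotient between the domains of the path embeddings `m` and `n`
(the pairs `⟨m, n⟩` of Definition 7.3). -/
def QuotPair (A : PreArboreal C) {X Y : C}
    (m : PathsOver A X) (n : PathsOver A Y) : Prop :=
  ∃ e : m.sub.dom ⟶ n.sub.dom, A.IsQ e

/-- A positive back-and-forth system from `X` to `Y`: a set `B` of pairs `⟨m, n⟩`
(each admitting a quotient `dom m ↠ dom n`) containing the pair of roots and
satisfying the forth and back conditions along the covering relations. -/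
def IsPBFS (A : PreArboreal C) (X Y : C)
    (B : PathsOver A X → PathsOver A Y → Prop) : Prop :=
  (∀ m n, B m n → A.QuotPair m n) ∧
  (∃ m n, A.pRoot m ∧ A.pRoot n ∧ B m n) ∧
  (∀ m n, B m n → ∀ m', A.pcov m m' → ∃ n', A.pcov n n' ∧ B m' n') ∧
  (∀ m n, B m n → ∀ n', A.pcov n n' → ∃ m', A.pcov m m' ∧ B m' n')

/-- A positive back-and-forth system is strong if it is downward closed along the
covering relations. -/
def IsStrong (A : PreArboreal C) {X Y : C}
    (B : PathsOver A X → PathsOver A Y → Prop) : Prop :=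
  ∀ m n, B m n → ∀ m' n', A.pcov m' m → A.pcov n' n → B m' n'

end PreArboreal
namespace PBFSAux
open PreArboreal

variable {A : PreArboreal C} {X Y : C}

theorem ple_refl (p : PathsOver A X) : A.ple p p := ⟨𝟙 _, Category.id_comp _⟩

theorem ple_trans {p q r : PathsOver A X} (h : A.ple p q) (k : A.ple q r) : A.ple p r := by
  obtain ⟨f, hf⟩ := h
  obtain ⟨g, hg⟩ := k
  exact ⟨f ≫ g, by rw [Category.assoc, hg, hf]⟩

def peq (p q : PathsOver A X) : Prop := A.ple p q ∧ A.ple q p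

theorem peq_iso {p q : PathsOver A X} (h : peq p q) :
    ∃ f : p.sub.dom ⟶ q.sub.dom, IsIso f := by
  obtain ⟨⟨f, hf⟩, ⟨g, hg⟩⟩ := h
  haveI := A.m_mono _ p.sub.emb
  haveI := A.m_mono _ q.sub.emb
  refine ⟨f, g, ?_, ?_⟩
  · rw [← cancel_mono p.sub.hom, Category.assoc, hg, hf, Category.id_comp]
  · rw [← cancel_mono q.sub.hom, Category.assoc, hf, hg, Category.id_comp]

theorem isQ_iso_comp {P P' R R' : C} (f : P ⟶ P') [IsIso f] (e : P' ⟶ R) (g : R ⟶ R') [IsIso g]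
    (he : A.IsQ e) : A.IsQ (f ≫ e ≫ g) := by
  rw [A.q_llp] at he ⊢
  intro X' Y' m hm
  haveI := he m hm
  infer_instance

theorem emb_cancel {P P' R : C} (h : P ⟶ P') (k : P' ⟶ R) (hk : A.IsM k) (hhk : A.IsM (h ≫ k)) :
    A.IsM h := by
  rw [A.m_rlp]
  intro X' Y' f hf
  haveI := A.m_mono _ hk
  haveI := (A.m_rlp _).1 hhk f hf
  refine ⟨fun {a b} sq => ?_⟩
  have sq' : CommSq a f (h ≫ k) (b ≫ k) := ⟨by rw [← Category.assoc, sq.w, Category.assoc]⟩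
  refine ⟨⟨⟨sq'.lift, sq'.fac_left, ?_⟩⟩⟩
  rw [← cancel_mono k, Category.assoc]
  exact sq'.fac_right

theorem comparable {p p' q : PathsOver A X} (h : A.ple p q) (h' : A.ple p' q) :
    A.ple p p' ∨ A.ple p' p := by
  obtain ⟨f, hf⟩ := h
  obtain ⟨g, hg⟩ := h'
  have mf : A.IsM f := emb_cancel f q.sub.hom q.sub.emb (hf ▸ p.sub.emb)
  have mg : A.IsM g := emb_cancel g q.sub.hom q.sub.emb (hg ▸ p'.sub.emb)
  rcases q.path.1 ⟨_, f, mf⟩ ⟨_, g, mg⟩ with ⟨k, hk⟩ | ⟨k, hk⟩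
  · left
    refine ⟨k, ?_⟩
    dsimp at hk
    rw [← hg, ← hf, ← hk, Category.assoc]
  · right
    refine ⟨k, ?_⟩
    dsimp at hk
    rw [← hg, ← hf, ← hk, Category.assoc]

theorem pcov_congr_left {p p' q : PathsOver A X} (e : peq p p') (h : A.pcov p q) :
    A.pcov p' q :=
  ⟨⟨ple_trans e.2 h.1.1, fun k => h.1.2 (ple_trans k e.2)⟩, fun z hz =>
    h.2 z ⟨⟨ple_trans e.1 hz.1.1, fun k => hz.1.2 (ple_trans k e.1)⟩, hz.2⟩⟩

theorem pcov_congr_right {p q q' : PathsOver A X} (e : peq q q') (h : A.pcov p q) :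
    A.pcov p q' :=
  ⟨⟨ple_trans h.1.1 e.1, fun k => h.1.2 (ple_trans e.1 k)⟩, fun z hz =>
    h.2 z ⟨hz.1, ⟨ple_trans hz.2.1 e.2, fun k => hz.2.2 (ple_trans e.2 k)⟩⟩⟩

theorem pcov_unique {p p' q : PathsOver A X} (h : A.pcov p q) (h' : A.pcov p' q) :
    peq p p' := by
  rcases comparable h.1.1 h'.1.1 with k | k
  · exact ⟨k, by_contra fun n => h.2 p' ⟨⟨k, n⟩, h'.1⟩⟩
  · exact ⟨by_contra fun n => h'.2 p ⟨⟨k, n⟩, h.1⟩, k⟩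

/-- Pairs reachable from the roots along covers staying inside `B`. -/
inductive Reach (A : PreArboreal C) {X Y : C} (B : PathsOver A X → PathsOver A Y → Prop) :
    PathsOver A X → PathsOver A Y → Prop
  | root (m n) : A.pRoot m → A.pRoot n → B m n → Reach A B m n
  | step (m n m' n') : Reach A B m n → A.pcov m m' → A.pcov n n' → B m' n' → Reach A B m' n'

theorem Reach.mem {B : PathsOver A X → PathsOver A Y → Prop} {m n} (h : Reach A B m n) :
    B m n := by
  cases h <;> assumption

end PBFSAux

open PBFSAux

/-- in any arboreal category, if there exists a positive back-and-forth
system from `X` to `Y`, then there exists a strong positive back-and-forth system from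
`X` to `Y`. -/
theorem strong_positive_back_and_forth_system
    {C : Type u} [Category.{v} C] (A : Arboreal C) (X Y : C)
    (h : ∃ B, PreArboreal.IsPBFS A.toPreArboreal X Y B) :
    ∃ B, PreArboreal.IsPBFS A.toPreArboreal X Y B ∧
      PreArboreal.IsStrong A.toPreArboreal B := by
  obtain ⟨B, hq, ⟨r, s, hr, hs, hrs⟩, hf, hb⟩ := h
  refine ⟨fun m n => ∃ m0 n0, peq m m0 ∧ peq n n0 ∧ Reach A.toPreArboreal B m0 n0,
    ⟨?_, ?_, ?_, ?_⟩, ?_⟩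
  · rintro m n ⟨m0, n0, hm, hn, h⟩
    obtain ⟨e, he⟩ := hq _ _ h.mem
    obtain ⟨f, _⟩ := peq_iso hm
    obtain ⟨g, _⟩ := peq_iso hn.symm
    exact ⟨f ≫ e ≫ g, isQ_iso_comp f e g he⟩
  · exact ⟨r, s, hr, hs, r, s, ⟨ple_refl _, ple_refl _⟩, ⟨ple_refl _, ple_refl _⟩,
      Reach.root _ _ hr hs hrs⟩
  · rintro m n ⟨m0, n0, hm, hn, h⟩ m' hm'
    have c := pcov_congr_left hm hm'
    obtain ⟨n', cn, hB⟩ := hf _ _ h.mem m' c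
    exact ⟨n', pcov_congr_left hn.symm cn, m', n', ⟨ple_refl _, ple_refl _⟩,
      ⟨ple_refl _, ple_refl _⟩, Reach.step _ _ _ _ h c cn hB⟩
  · rintro m n ⟨m0, n0, hm, hn, h⟩ n' hn'
    have c := pcov_congr_left hn hn'
    obtain ⟨m', cm, hB⟩ := hb _ _ h.mem n' c
    exact ⟨m', pcov_congr_left hm.symm cm, m', n', ⟨ple_refl _, ple_refl _⟩,
      ⟨ple_refl _, ple_refl _⟩, Reach.step _ _ _ _ h cm c hB⟩
  · rintro m n ⟨m0, n0, hm, hn, h⟩ m' n' cm cn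
    have cm := pcov_congr_right hm cm
    have cn := pcov_congr_right hn cn
    cases h with
    | root _ _ h1 h2 h3 => exact absurd (h1 m') cm.1.2
    | step m1 n1 _ _ h1 h2 h3 h4 =>
      exact ⟨m1, n1, pcov_unique cm h2, pcov_unique cn h3, h1⟩
end

section
/- Let X and Y be objects of an arboreal category. Duplicator has a winning strategy in the positive arboreal game 𝒢⁺(X,Y) if, and only if, there exists a positive back-and-forth system from X to Y. -/
open CategoryTheory CategoryTheory.Limits

universe v u

variable {C : Type u} [Category.{v} C]

namespace PreArboreal

/-- Duplicator has a winning strategy in the positive arboreal game `𝒢⁺(X, Y)`: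
winning positions are pairs `(m, n)` of path embeddings with an arrow
`dom m → dom n`; the initial position is the pair of roots, and at each round either
Spoiler moves to a cover `m ⋖ m'` and Duplicator responds with a cover `n ⋖ n'`, or
conversely; Duplicator must stay within winning positions forever.  This is rendered
by the existence of a winning invariant: a set `S` of positions containing the initial
position, consisting of winning positions, and closed under Spoiler's moves. -/
def GPlusWin (A : PreArboreal C) (X Y : C) : Prop :=
  ∃ S : PathsOver A X → PathsOver A Y → Prop,
    (∃ m n, A.pRoot m ∧ A.pRoot n ∧ S m n) ∧
    ∀ m n, S m n → Nonempty (m.sub.dom ⟶ n.sub.dom) ∧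
      (∀ m', A.pcov m m' → ∃ n', A.pcov n n' ∧ S m' n') ∧
      (∀ n', A.pcov n n' → ∃ m', A.pcov m m' ∧ S m' n')

end PreArboreal

namespace PreArboreal

theorem isQ_comp (A : PreArboreal C) {X Y Z : C} {f : X ⟶ Y} {g : Y ⟶ Z}
    (hf : A.IsQ f) (hg : A.IsQ g) : A.IsQ (f ≫ g) := by
  rw [A.q_llp]
  intro X' Y' k hk
  have := (A.q_llp f).1 hf k hk
  have := (A.q_llp g).1 hg k hk
  infer_instance

theorem isQ_of_iso (A : PreArboreal C) {X Y : C} (f : X ⟶ Y) [IsIso f] : A.IsQ f := by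
  rw [A.q_llp]
  intro X' Y' k hk
  infer_instance

theorem isM_comp (A : PreArboreal C) {X Y Z : C} {f : X ⟶ Y} {g : Y ⟶ Z}
    (hf : A.IsM f) (hg : A.IsM g) : A.IsM (f ≫ g) := by
  rw [A.m_rlp]
  intro X' Y' k hk
  have := (A.m_rlp f).1 hf k hk
  have := (A.m_rlp g).1 hg k hk
  infer_instance

theorem isM_cancel (A : PreArboreal C) {X Y Z : C} {f : X ⟶ Y} {g : Y ⟶ Z}
    (hfg : A.IsM (f ≫ g)) (hg : A.IsM g) : A.IsM f := by
  rw [A.m_rlp]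
  intro X' Y' k hk
  have := (A.m_rlp _).1 hfg k hk
  have := A.m_mono g hg
  refine ⟨fun {a b} sq => ?_⟩
  have sq' : CommSq a k (f ≫ g) (b ≫ g) := ⟨by rw [← Category.assoc, sq.w, Category.assoc]⟩
  refine ⟨⟨⟨sq'.lift, sq'.fac_left, ?_⟩⟩⟩
  rw [← cancel_mono g, Category.assoc, sq'.fac_right]

/-- If a composite is a quotient and its second factor is an embedding, the latter is iso. -/
theorem isIso_of_comp (A : PreArboreal C) {X Y Z : C} {f : X ⟶ Y} {g : Y ⟶ Z}
    (hfg : A.IsQ (f ≫ g)) (hg : A.IsM g) : IsIso g := by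
  have := (A.q_llp _).1 hfg g hg
  have := A.m_mono g hg
  have sq : CommSq f (f ≫ g) g (𝟙 Z) := ⟨by simp⟩
  refine ⟨sq.lift, ?_, sq.fac_right⟩
  rw [← cancel_mono g, Category.assoc, sq.fac_right]
  simp

theorem isIso_of_section (A : PreArboreal C) {X Y : C} {g : X ⟶ Y} (hg : A.IsM g)
    (s : Y ⟶ X) (h : s ≫ g = 𝟙 Y) : IsIso g := by
  have := A.m_mono g hg
  refine ⟨s, ?_, h⟩
  rw [← cancel_mono g, Category.assoc, h]
  simp

theorem path_sub (A : PreArboreal C) {P I : C} (hP : A.IsPathObj P) (k : I ⟶ P)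
    (hk : A.IsM k) : A.IsPathObj I := by
  classical
  have := A.m_mono k hk
  let Φ : A.MSub I → A.MSub P := fun f => ⟨f.dom, f.hom ≫ k, A.isM_comp f.emb hk⟩
  have key : ∀ f g : A.MSub I, A.mle (Φ f) (Φ g) → A.mle f g := by
    rintro f g ⟨h, hh⟩
    refine ⟨h, ?_⟩
    rw [← cancel_mono k, Category.assoc]
    exact hh
  refine ⟨fun f g => (hP.1 (Φ f) (Φ g)).imp (key _ _) (key _ _), ?_⟩
  obtain ⟨n, l, hl⟩ := hP.2
  have trans : ∀ a b c : A.MSub P, A.mle a b → A.mle b c → A.mle a c := by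
    rintro a b c ⟨h, hh⟩ ⟨h', hh'⟩
    exact ⟨h ≫ h', by rw [Category.assoc, hh', hh]⟩
  refine ⟨n, fun i => if H : ∃ f, A.mequiv (Φ f) (l i) then H.choose else
    ⟨I, 𝟙 I, (A.m_rlp _).2 fun f _ => inferInstance⟩, fun f => ?_⟩
  obtain ⟨i, hi⟩ := hl (Φ f)
  have H : ∃ f, A.mequiv (Φ f) (l i) := ⟨f, hi⟩
  refine ⟨i, ?_⟩
  simp only [dif_pos H]
  have hc := H.choose_spec
  exact ⟨key _ _ (trans _ _ _ hi.1 hc.2), key _ _ (trans _ _ _ hc.1 hi.2)⟩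

/-- The path embedding obtained by restricting along an embedding. -/
def restr (A : PreArboreal C) {X I : C} (n : PathsOver A X) (k : I ⟶ n.sub.dom)
    (hk : A.IsM k) : PathsOver A X :=
  ⟨⟨I, k ≫ n.sub.hom, A.isM_comp hk n.sub.emb⟩, A.path_sub n.path k hk⟩

theorem isIso_of_ple_restr (A : PreArboreal C) {X I : C} (n : PathsOver A X)
    (k : I ⟶ n.sub.dom) (hk : A.IsM k) (h : A.ple n (A.restr n k hk)) : IsIso k := by
  obtain ⟨s, hs⟩ : ∃ s : n.sub.dom ⟶ I, s ≫ k ≫ n.sub.hom = n.sub.hom := h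
  have := A.m_mono _ n.sub.emb
  refine A.isIso_of_section hk s ?_
  rw [← cancel_mono n.sub.hom, Category.assoc, Category.id_comp]
  exact hs

theorem quot_root (A : PreArboreal C) {P Y : C} (n : PathsOver A Y) (hn : A.pRoot n)
    (f : P ⟶ n.sub.dom) : A.IsQ f := by
  obtain ⟨I, e, k, he, hk, rfl⟩ := A.factor f
  have := A.isIso_of_ple_restr n k hk (hn _)
  exact A.isQ_comp he (A.isQ_of_iso k)

end PreArboreal

theorem Arboreal.quot_step (A : Arboreal C) {X Y : C}
    {m m' : PreArboreal.PathsOver A.toPreArboreal X}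
    {n n' : PreArboreal.PathsOver A.toPreArboreal Y}
    (H : ∀ f : m.sub.dom ⟶ n.sub.dom, A.IsQ f)
    (hm : A.pcov m m') (hn : A.pcov n n') (f : m'.sub.dom ⟶ n'.sub.dom) : A.IsQ f := by
  obtain ⟨I, e, k, he, hk, rfl⟩ := A.factor f
  obtain ⟨⟨⟨i, hi⟩, hm2⟩, -⟩ := hm
  obtain ⟨⟨⟨j, hj⟩, hn2⟩, hn3⟩ := hn
  have hiM : A.IsM i := A.isM_cancel (by rw [hi]; exact m.sub.emb) m'.sub.emb
  have hjM : A.IsM j := A.isM_cancel (by rw [hj]; exact n.sub.emb) n'.sub.emb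
  have hI := A.path_sub n'.path k hk
  have fin : A.ple n' (A.restr n' k hk) → A.IsQ (e ≫ k) := by
    intro h
    have := A.isIso_of_ple_restr n' k hk h
    exact A.isQ_comp he (A.isQ_of_iso k)
  by_cases hle : A.mle ⟨I, k, hk⟩ ⟨n.sub.dom, j, hjM⟩
  · exfalso
    obtain ⟨b, hb⟩ := hle
    dsimp at b hb
    have hbM : A.IsM b := A.isM_cancel (by rw [hb]; exact hk) hjM
    have h1 : A.IsQ ((i ≫ e) ≫ b) := H _
    have := A.isIso_of_comp h1 hbM
    have h2 : A.IsQ (e ≫ b) := A.isQ_comp he (A.isQ_of_iso b)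
    have h3 : A.IsQ i := (A.twoOfThree m.path m'.path n.path i (e ≫ b)).2.2 h2
      (by rw [← Category.assoc]; exact h1)
    have : IsIso i := A.isIso_of_comp (f := 𝟙 _) (by simpa using h3) hiM
    exact hm2 ⟨inv i, by rw [IsIso.inv_comp_eq, hi]⟩
  · obtain ⟨t, ht⟩ := (n'.path.1 ⟨I, k, hk⟩ ⟨n.sub.dom, j, hjM⟩).resolve_left hle
    dsimp at t ht
    apply fin
    by_contra hcon
    refine hn3 (A.restr n' k hk) ⟨⟨⟨t, ?_⟩, ?_⟩, ⟨⟨k, rfl⟩, hcon⟩⟩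
    · show t ≫ k ≫ n'.sub.hom = _
      rw [← Category.assoc, ht, hj]
    · intro hc
      obtain ⟨b, hb⟩ : ∃ b : I ⟶ n.sub.dom, b ≫ n.sub.hom = k ≫ n'.sub.hom := hc
      apply hle
      refine ⟨b, ?_⟩
      show b ≫ j = k
      have := A.m_mono _ n'.sub.emb
      rw [← cancel_mono n'.sub.hom, Category.assoc, hj]
      exact hb

/-- Duplicator has a winning strategy in the positive arboreal game
`𝒢⁺(X, Y)` if, and only if, there exists a positive back-and-forth system from `X`
to `Y`. -/
theorem positive_arboreal_game_iff_back_and_forth_system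
    {C : Type u} [Category.{v} C] (A : Arboreal C) (X Y : C) :
    PreArboreal.GPlusWin A.toPreArboreal X Y ↔
      ∃ B, PreArboreal.IsPBFS A.toPreArboreal X Y B := by
  constructor
  · rintro ⟨S, ⟨m, n, hm, hn, hS⟩, hwin⟩
    refine ⟨fun m n => S m n ∧ ∀ f : m.sub.dom ⟶ n.sub.dom, A.IsQ f, ?_, ?_, ?_, ?_⟩
    · rintro m n ⟨h, hq⟩
      obtain ⟨f⟩ := (hwin m n h).1
      exact ⟨f, hq f⟩
    · exact ⟨m, n, hm, hn, hS, A.quot_root n hn⟩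
    · rintro m n ⟨h, hq⟩ m' hm'
      obtain ⟨n', hn', h'⟩ := (hwin m n h).2.1 m' hm'
      exact ⟨n', hn', h', A.quot_step hq hm' hn'⟩
    · rintro m n ⟨h, hq⟩ n' hn'
      obtain ⟨m', hm', h'⟩ := (hwin m n h).2.2 n' hn'
      exact ⟨m', hm', h', A.quot_step hq hm' hn'⟩
  · rintro ⟨B, hB, hr, hf, hb⟩
    exact ⟨B, hr, fun m n h => ⟨(hB m n h).elim fun e _ => ⟨e⟩, hf m n h, hb m n h⟩⟩
end
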